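/- arXiv:0807.2076 — 2 statements merged into one kernel-verified Lean document; each statement's English description precedes it below -/
import Mathlib

section
/- Let Φ : ℝ → (−∞, +∞] be a proper, lower semicontinuous, convex function whose effective domain has nonempty interior, and let a be a point in the interior of Dom(Φ). Then there exist positive constants R and C such that for every z ∈ ℝ and every integer n ≥ 1, the Yosida approximation satisfies A_n(z)·(z − a) ≥ R·|A_n(z)| − C·|z| − C. -/
/-!
Write `A = A_n(z)` and `y = J_n(z)`, so that `A ∈ ∂Φ(y)` and `z - y = A / n`. Testing the subgradient
inequality at `a ± r`, with the sign of `A` and with `r` so small that `a ± r ∈ Dom(Φ)`, gives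
`A (y - a) ≥ r |A| + Φ(y) - Φ(a ± r)`. Moreover `Φ` has an affine minorant: the resolvent equation at
any single point, here `J_1(a)`, supplies a subgradient. Hence `Φ(y) ≥ q + p (y - w)`, and the part
of this bound that involves `y - z` is absorbed by `A (z - y) = n (z - y)² ≥ (z - y)²`.
-/

open Set Filter

noncomputable section

/-- `Φ : ℝ → (−∞, +∞]` (encoded as `EReal` with `Φ x ≠ ⊥`) is proper,
lower semicontinuous and convex. -/
def IsProperLscConvex (Φ : ℝ → EReal) : Prop :=
  (∀ x, Φ x ≠ ⊥) ∧ (∃ x, Φ x ≠ ⊤) ∧ LowerSemicontinuous Φ ∧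
    ∀ x y t : ℝ, 0 ≤ t → t ≤ 1 →
      Φ (t * x + (1 - t) * y) ≤ (t : EReal) * Φ x + ((1 - t : ℝ) : EReal) * Φ y

/-- The subdifferential `∂Φ(y) = {p : ∀ u, Φ(u) ≥ Φ(y) + p·(u − y)}`. -/
def subdiff (Φ : ℝ → EReal) (y : ℝ) : Set ℝ :=
  {p : ℝ | ∀ u : ℝ, Φ y + ((p * (u - y) : ℝ) : EReal) ≤ Φ u}

/-- The subgradient inequality in real terms: a point carrying a subgradient has a finite value,
and the inequality can be tested at every point where `Φ` is finite. -/
lemma subdiff_real {Φ : ℝ → EReal} (hbot : ∀ x, Φ x ≠ ⊥) {y p u M : ℝ}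
    (hp : p ∈ subdiff Φ y) (hu : Φ u = M) :
    ∃ v : ℝ, Φ y = v ∧ v + p * (u - y) ≤ M := by
  have h := hp u
  rw [hu] at h
  have htop : Φ y ≠ ⊤ := by
    intro ht
    rw [ht, EReal.top_add_coe] at h
    exact EReal.coe_ne_top M (top_le_iff.mp h)
  refine ⟨(Φ y).toReal, (EReal.coe_toReal htop (hbot y)).symm, ?_⟩
  rw [← EReal.coe_toReal htop (hbot y)] at h
  exact_mod_cast h

/-- If `a` is an interior point of `Dom(Φ)`, then there are positive constants `R, C`
such that `A_n(z)·(z − a) ≥ R·|A_n(z)| − C·|z| − C` for all `z ∈ ℝ` and all `n ≥ 1`. -/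
theorem yosida_interior_estimate (Φ : ℝ → EReal) (hΦ : IsProperLscConvex Φ)
    (a : ℝ) (ha : a ∈ interior {x : ℝ | Φ x ≠ ⊤})
    (J : ℕ → ℝ → ℝ)
    (hJ : ∀ n : ℕ, 1 ≤ n → ∀ x : ℝ, (n : ℝ) * (x - J n x) ∈ subdiff Φ (J n x)) :
    ∃ R : ℝ, 0 < R ∧ ∃ C : ℝ, 0 < C ∧ ∀ z : ℝ, ∀ n : ℕ, 1 ≤ n →
      R * |(n : ℝ) * (z - J n z)| - C * |z| - C ≤ (n : ℝ) * (z - J n z) * (z - a) := by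
  obtain ⟨hbot, -, -, -⟩ := hΦ
  obtain ⟨ε, hε, hball⟩ := Metric.mem_nhds_iff.mp (mem_interior_iff_mem_nhds.mp ha)
  have hfin : ∀ x : ℝ, |x - a| < ε → ∃ M : ℝ, Φ x = M := fun x hx =>
    ⟨(Φ x).toReal, (EReal.coe_toReal (hball (by simpa [Real.dist_eq] using hx)) (hbot x)).symm⟩
  obtain ⟨M₀, hM₀⟩ := hfin a (by simpa using hε)
  obtain ⟨M₁, hM₁⟩ := hfin (a + ε / 2) (by rw [abs_lt]; constructor <;> linarith)
  obtain ⟨M₂, hM₂⟩ := hfin (a - ε / 2) (by rw [abs_lt]; constructor <;> linarith)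
  -- The affine minorant `u ↦ q + p * (u - w)` of `Φ`.
  obtain ⟨p, w, hp⟩ : ∃ p w : ℝ, p ∈ subdiff Φ w := ⟨_, _, hJ 1 le_rfl a⟩
  obtain ⟨q, hq, -⟩ := subdiff_real hbot hp hM₀
  refine ⟨ε / 2, by positivity, 1 + |p| + p ^ 2 + |q| + |p * w| + |M₁| + |M₂|, by positivity, ?_⟩
  intro z n hn
  have hA := hJ n hn z
  set y := J n z
  set A := (n : ℝ) * (z - y) with hAdef
  obtain ⟨v, hv, h₁⟩ := subdiff_real hbot hA hM₁
  obtain ⟨v', hv', h₂⟩ := subdiff_real hbot hA hM₂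
  obtain rfl : v' = v := by
    rw [hv] at hv'
    exact_mod_cast hv'.symm
  have hmin : q + p * (y - w) ≤ v' := by
    obtain ⟨q', hq', h⟩ := subdiff_real hbot hp hv
    obtain rfl : q' = q := by
      rw [hq] at hq'
      exact_mod_cast hq'.symm
    exact h
  have hn' : (1 : ℝ) ≤ n := by exact_mod_cast hn
  have hsq : (z - y) ^ 2 ≤ A * (z - y) := by
    rw [hAdef]
    nlinarith [sq_nonneg (z - y)]
  have habs : ε / 2 * |A| - |M₁| - |M₂| + v' ≤ A * (y - a) := by
    rcases abs_cases A with ⟨h, -⟩ | ⟨h, -⟩ <;> rw [h] <;>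
      nlinarith [le_abs_self M₁, le_abs_self M₂, abs_nonneg M₁, abs_nonneg M₂]
  have hpz : -(|p| * |z|) ≤ p * z := by
    rw [← abs_mul]
    exact neg_abs_le _
  have hC : |p| * |z| ≤ (1 + |p| + p ^ 2 + |q| + |p * w| + |M₁| + |M₂|) * |z| := by
    gcongr
    have : 0 ≤ 1 + p ^ 2 + |q| + |p * w| + |M₁| + |M₂| := by positivity
    linarith
  -- Young's inequality with a non-optimal constant.
  have hyoung : p * (z - y) ≤ (z - y) ^ 2 + p ^ 2 := by
    nlinarith [sq_nonneg (z - y - p / 2), sq_nonneg p]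
  have hsplit : A * (z - a) = A * (y - a) + A * (z - y) := by ring
  rw [hsplit]
  linarith [neg_abs_le q, le_abs_self (p * w), abs_nonneg p]
end
end

section
/- Let Φ : ℝ → (−∞, +∞] be a proper, lower semicontinuous, convex function and let pr : ℝ → ℝ denote the metric projection onto the closed convex set cl(Dom(Φ)). Then for every x ∈ ℝ, the resolvents converge to the projection: J_n(x) → pr(x) as n → ∞. -/
/-!
Fix `x`, write `p = pr x`, `y = J n x`, `e = y - p`. Testing the subgradient `n (x - y)` at `y`
against a point `u` of the domain close to `p`, and bounding `Φ y` below by the affine minorant that the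
first resolvent supplies, gives `n (x - y)(u - y) ≤ C + D |e|` with `C`, `D` independent of `n`.
The variational inequality `(x - p)(y - p) ≤ 0` for the projection makes the left-hand side at
least `n (e² - |u - p| (|x - p| + |e|))`. Hence `e²` is small for large `n`; the quadratic term
absorbs the term linear in `|e|`, so no a priori bound on `J n x` is needed.
-/

open Set Filter

noncomputable section

/-- The domain of `Φ` contains every point at which `Φ` has a subgradient. -/
lemma ne_top_of_mem_subdiff {Φ : ℝ → EReal} (hΦ : IsProperLscConvex Φ) {y q : ℝ}
    (h : q ∈ subdiff Φ y) : Φ y ≠ ⊤ := by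
  obtain ⟨-, ⟨u, hu⟩, -, -⟩ := hΦ
  intro hy
  have h1 := h u
  rw [hy, EReal.top_add_coe] at h1
  exact hu (top_le_iff.mp h1)

lemma toReal_le_of_mem_subdiff {Φ : ℝ → EReal} (hΦ : IsProperLscConvex Φ) {y q u : ℝ}
    (h : q ∈ subdiff Φ y) (hu : Φ u ≠ ⊤) :
    (Φ y).toReal + q * (u - y) ≤ (Φ u).toReal := by
  have h1 := h u
  rw [← EReal.coe_toReal hu (hΦ.1 u),
    ← EReal.coe_toReal (ne_top_of_mem_subdiff hΦ h) (hΦ.1 y)] at h1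
  exact_mod_cast h1

lemma convex_dom {Φ : ℝ → EReal} (hΦ : IsProperLscConvex Φ) :
    Convex ℝ {y : ℝ | Φ y ≠ ⊤} := by
  intro a ha b hb s t hs ht hst
  have h := hΦ.2.2.2 a b s hs (by linarith)
  have ht' : 1 - s = t := by linarith
  simp only [mem_ofPred_eq] at ha hb
  rw [ht', ← EReal.coe_toReal ha (hΦ.1 a), ← EReal.coe_toReal hb (hΦ.1 b)] at h
  simp only [mem_ofPred_eq, smul_eq_mul]
  intro htop
  rw [htop, ← EReal.coe_mul, ← EReal.coe_mul, ← EReal.coe_add] at h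
  exact EReal.coe_ne_top _ (top_le_iff.mp h)

/-- The variational inequality for a closest point of a convex set of reals. -/
lemma mul_nonpos_of_closest {K : Set ℝ} (hK : Convex ℝ K) {x p z : ℝ} (hp : p ∈ K)
    (hmin : ∀ w ∈ K, |x - p| ≤ |x - w|) (hz : z ∈ K) : (x - p) * (z - p) ≤ 0 := by
  by_contra! hpos
  have hne : 0 < (z - p) ^ 2 := by
    have : z - p ≠ 0 := by
      intro h0
      simp [h0] at hpos
    positivity
  -- Moving from `p` towards `z` by a fraction `t < 2 (x - p) / (z - p)` strictly decreases the
  -- distance to `x`.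
  obtain ⟨t, ht0, ht1, ht⟩ : ∃ t : ℝ, 0 < t ∧ t ≤ 1 ∧ t * (z - p) ^ 2 ≤ (x - p) * (z - p) := by
    refine ⟨min 1 ((x - p) * (z - p) / (z - p) ^ 2), by positivity, min_le_left _ _, ?_⟩
    rw [← le_div_iff₀ hne]
    exact min_le_right _ _
  have hw : (1 - t) * p + t * z ∈ K :=
    hK hp hz (by linarith) ht0.le (by ring)
  have h := sq_le_sq.mpr (hmin _ hw)
  nlinarith [mul_le_mul_of_nonneg_left ht ht0.le, mul_pos ht0 hpos]

/-- The resolvents converge pointwise to the metric projection onto `cl(Dom(Φ))`: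
`J_n(x) → pr(x)` as `n → ∞`. -/
theorem resolvent_tendsto_proj (Φ : ℝ → EReal) (hΦ : IsProperLscConvex Φ)
    (J : ℕ → ℝ → ℝ)
    (hJ : ∀ n : ℕ, 1 ≤ n → ∀ x : ℝ, (n : ℝ) * (x - J n x) ∈ subdiff Φ (J n x))
    (pr : ℝ → ℝ)
    (hpr : ∀ x : ℝ, pr x ∈ closure {y : ℝ | Φ y ≠ ⊤} ∧
      ∀ z ∈ closure {y : ℝ | Φ y ≠ ⊤}, |x - pr x| ≤ |x - z|) :
    ∀ x : ℝ, Tendsto (fun n : ℕ => J n x) atTop (nhds (pr x)) := by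
  intro x
  obtain ⟨hpK, hmin⟩ := hpr x
  set p := pr x with hp
  set q := x - J 1 x with hq
  set a := x - p with ha
  rw [Metric.tendsto_atTop]
  intro δ hδ
  obtain ⟨ε, hε0, hε1, hεδ⟩ : ∃ ε : ℝ, 0 < ε ∧ ε ≤ 1 ∧ (6 + 2 * |a|) * ε < δ ^ 2 := by
    have hc : 0 < 6 + 2 * |a| := by positivity
    refine ⟨min 1 (δ ^ 2 / (6 + 2 * |a|) / 2), by positivity, min_le_left _ _, ?_⟩
    calc (6 + 2 * |a|) * min 1 (δ ^ 2 / (6 + 2 * |a|) / 2)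
        ≤ (6 + 2 * |a|) * (δ ^ 2 / (6 + 2 * |a|) / 2) :=
          mul_le_mul_of_nonneg_left (min_le_right _ _) hc.le
      _ = δ ^ 2 / 2 := by field_simp
      _ < δ ^ 2 := half_lt_self (by positivity)
  obtain ⟨u, hu, hup⟩ := Metric.mem_closure_iff.mp hpK ε hε0
  rw [dist_comm, Real.dist_eq] at hup
  set C := |(Φ u).toReal - (Φ (J 1 x)).toReal - q * (p - J 1 x)| with hC
  obtain ⟨N, hN⟩ := exists_nat_gt ((C + |q|) / ε)
  refine ⟨max N 1, fun n hn => ?_⟩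
  have hn1 : 1 ≤ n := (le_max_right _ _).trans hn
  have hnR : (N : ℝ) ≤ n := by exact_mod_cast (le_max_left _ _).trans hn
  have hn0 : (0 : ℝ) < n := by exact_mod_cast hn1
  have hCn : C + |q| ≤ n * ε := by
    have h := hN.le.trans hnR
    rwa [div_le_iff₀ hε0] at h
  have hCn1 : C ≤ n * ε := by linarith [abs_nonneg q]
  have hCn2 : |q| ≤ n * ε := by
    have : 0 ≤ C := abs_nonneg _
    linarith
  have hyD := ne_top_of_mem_subdiff hΦ (hJ n hn1 x)
  have hsub := toReal_le_of_mem_subdiff hΦ (hJ n hn1 x) hu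
  have haff : (Φ (J 1 x)).toReal + q * (J n x - J 1 x) ≤ (Φ (J n x)).toReal := by
    have h1 := hJ 1 le_rfl x
    rw [Nat.cast_one, one_mul] at h1
    exact toReal_le_of_mem_subdiff hΦ h1 hyD
  have hvar : a * (J n x - p) ≤ 0 :=
    mul_nonpos_of_closest (convex_dom hΦ).closure hpK hmin (subset_closure hyD)
  rw [Real.dist_eq]
  set e := J n x - p with he
  have hupper : n * ((x - J n x) * (u - J n x)) ≤ n * (ε + ε * |e|) := by
    have h1 : n * ((x - J n x) * (u - J n x)) ≤ C + |q| * |e| := by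
      have h2 : (Φ u).toReal - (Φ (J 1 x)).toReal - q * (p - J 1 x) ≤ C := le_abs_self _
      have h3 : -(q * e) ≤ |q| * |e| := by
        rw [← abs_mul]
        exact neg_le_abs _
      have h4 : q * (J n x - J 1 x) = q * e + q * (p - J 1 x) := by rw [he]; ring
      linarith
    have h5 := mul_le_mul_of_nonneg_right hCn2 (abs_nonneg e)
    linarith
  have hupper' := le_of_mul_le_mul_left hupper hn0
  have hlower : e ^ 2 - |a| * ε - |e| * ε ≤ (x - J n x) * (u - J n x) := by
    have h1 : (x - J n x) * (u - J n x) = a * (u - p) - a * e - e * (u - p) + e ^ 2 := by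
      rw [he, ha]; ring
    have h2 : -(a * (u - p)) ≤ |a| * ε :=
      (neg_le_abs _).trans (by rw [abs_mul]; gcongr)
    have h3 : e * (u - p) ≤ |e| * ε :=
      (le_abs_self _).trans (by rw [abs_mul]; gcongr)
    linarith
  have hsq : e ^ 2 < δ ^ 2 := by
    -- `2 ε |e| ≤ e² / 2 + 2 ε²`, and `ε² ≤ ε`.
    have h1 : ε ^ 2 ≤ ε := by nlinarith
    nlinarith [sq_nonneg (|e| - 2 * ε), sq_abs e]
  exact abs_lt_of_sq_lt_sq hsq hδ.le
end
end
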